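/- Let h(Q_U,n,k;·) denote the law of sampling k < n balls without replacement from an urn containing n balls of n different colours, where Q_U(j) = 1/n for j ∈ S = {1,…,n}. Then, for any mixing probability measure μ on ℳ(S), D( h(Q_U,n,k;·) ‖ M_{k,μ} ) ≥ log( n^k (n−k)! / n! ). -/

import Mathlib

open MeasureTheory
open scoped ENNReal

/-- The space `ℳ(S)` of probability measures on a measurable space `S`, equipped with
the σ-algebra `ℱ` generated by the evaluation maps `P ↦ P(A)`, `A` measurable
(obtained here as the subtype σ-algebra of the canonical σ-algebra on measures). -/
noncomputable instance probabilityMeasureMeasurableSpace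
    {α : Type*} [MeasurableSpace α] : MeasurableSpace (ProbabilityMeasure α) :=
  Subtype.instMeasurableSpace

open Classical in
/-- The Kullback–Leibler divergence (relative entropy) `D(μ‖ν)` between two measures,
defined as `∫ log (dμ/dν) dμ` when `μ ≪ ν` and this integral makes sense, and `+∞` otherwise. -/
noncomputable def klDiv {α : Type*} [MeasurableSpace α] (μ ν : Measure α) : ℝ≥0∞ :=
  if μ ≪ ν ∧ Integrable (llr μ ν) μ then ENNReal.ofReal (∫ x, llr μ ν x ∂μ) else ⊤

/-- The law `h(Q,n,k;·)` on `S^k` of the sequence of colours of `k` balls drawn uniformly at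
random *without replacement* from an urn of `n` balls whose colours are given by
`col : Fin n → Fin c` (the `n`-type `Q` describing the urn is `Q(j) = #col⁻¹(j)/n`):
the uniform average of the colour sequences over all injective sequences of `k` balls. -/
noncomputable def drawWithoutReplacement (n c k : ℕ) (col : Fin n → Fin c) :
    Measure (Fin k → Fin c) :=
  (((Finset.univ.filter (fun f : Fin k → Fin n => Function.Injective f)).card : ℝ≥0∞))⁻¹ •
    ∑ f ∈ Finset.univ.filter (fun f : Fin k → Fin n => Function.Injective f),
      Measure.dirac (col ∘ f)

/-- The single-draw colour distribution `Q` of an urn of `n` balls with colours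
`col : Fin n → Fin c`, i.e. `Q(j) = #col⁻¹(j)/n`. -/
noncomputable def urnColourDist (n c : ℕ) (col : Fin n → Fin c) : Measure (Fin c) :=
  ((n : ℝ≥0∞))⁻¹ • ∑ i : Fin n, Measure.dirac (col i)

/-- The law `b(Q,n,k;·) = Q^k` on `S^k` of `k` i.i.d. draws (*with replacement*) from the urn. -/
noncomputable def drawWithReplacement (n c k : ℕ) (col : Fin n → Fin c) :
    Measure (Fin k → Fin c) :=
  Measure.pi fun _ : Fin k => urnColourDist n c col

/-- The finset of injective sequences of length `k` in `Fin n`. -/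
def injSeq (n k : ℕ) : Finset (Fin k → Fin n) :=
  Finset.univ.filter (fun f : Fin k → Fin n => Function.Injective f)

/-- The complement of the range of a sequence. -/
def avoid {n k : ℕ} (g : Fin k → Fin n) : Finset (Fin n) :=
  (Finset.univ.image g)ᶜ

lemma mem_injSeq {n k : ℕ} {f : Fin k → Fin n} : f ∈ injSeq n k ↔ Function.Injective f := by
  simp [injSeq]

lemma card_injSeq (n k : ℕ) : (injSeq n k).card = n.descFactorial k := by
  have h := Fintype.card_congr (Equiv.subtypeInjectiveEquivEmbedding (Fin k) (Fin n))
  rw [Fintype.card_embedding_eq, Fintype.card_subtype] at h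
  simpa [injSeq] using h

lemma card_avoid {n k : ℕ} {g : Fin k → Fin n} (hg : Function.Injective g) :
    ((avoid g).card : ℝ) = n - k := by
  have h := Finset.card_add_card_compl (Finset.univ.image g)
  rw [Finset.card_image_of_injective _ hg] at h
  simp only [Finset.card_univ, Fintype.card_fin] at h
  have h' : ((k + (avoid g).card : ℕ) : ℝ) = (n : ℝ) := by exact_mod_cast h
  push_cast at h'
  linarith

lemma sum_avoid {n k : ℕ} {g : Fin k → Fin n} (hg : Function.Injective g) (q : Fin n → ℝ)
    (hq : ∑ i, q i = 1) : ∑ a ∈ avoid g, q a = 1 - ∑ i, q (g i) := by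
  have h := Finset.sum_add_sum_compl (Finset.univ.image g) q
  rw [Finset.sum_image (fun a _ b _ h => hg h), hq] at h
  unfold avoid
  linarith

lemma sum_injSeq_succ {n k : ℕ} (φ : (Fin (k + 1) → Fin n) → ℝ) :
    ∑ f ∈ injSeq n (k + 1), φ f =
      ∑ g ∈ injSeq n k, ∑ a ∈ avoid g, φ (Fin.cons a g : Fin (k + 1) → Fin n) := by
  rw [Finset.sum_sigma']
  symm
  refine Finset.sum_bij' (fun p _ => (Fin.cons p.2 p.1 : Fin (k + 1) → Fin n))
    (fun f _ => ⟨Fin.tail f, f 0⟩) ?_ ?_ ?_ ?_ ?_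
  · rintro ⟨g, a⟩ h
    simp only [Finset.mem_sigma, mem_injSeq, avoid, Finset.mem_compl, Finset.mem_image,
      Finset.mem_univ, true_and] at h
    rw [mem_injSeq, Fin.cons_injective_iff]
    exact ⟨fun ⟨i, hi⟩ => h.2 ⟨i, hi⟩, h.1⟩
  · intro f h
    rw [mem_injSeq, ← Fin.cons_self_tail f, Fin.cons_injective_iff] at h
    simp only [Finset.mem_sigma, mem_injSeq, avoid, Finset.mem_compl, Finset.mem_image,
      Finset.mem_univ, true_and]
    exact ⟨h.2, fun ⟨i, hi⟩ => h.1 ⟨i, hi⟩⟩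
  · rintro ⟨g, a⟩ h
    simp
  · intro f h
    simp
  · intros
    rfl

/-- Probability that `k` i.i.d. draws are distinct. -/
noncomputable def distinctProb {n : ℕ} (q : Fin n → ℝ) (k : ℕ) : ℝ :=
  ∑ f ∈ injSeq n k, ∏ i, q (f i)

lemma sum_symm {n m : ℕ} (q : Fin n → ℝ) (j : Fin (m + 1)) :
    ∑ x ∈ injSeq n (m + 1), (∏ i, q (x i)) * q (x j) =
      ∑ x ∈ injSeq n (m + 1), (∏ i, q (x i)) * q (x 0) := by
  refine Finset.sum_equiv ((Equiv.swap 0 j).arrowCongr (Equiv.refl (Fin n))) ?_ ?_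
  · intro x
    rw [mem_injSeq, mem_injSeq]
    simp [Equiv.arrowCongr]
  · intro x hx
    have : ∏ i, q (x (Equiv.swap 0 j i)) = ∏ i, q (x i) :=
      Equiv.prod_comp (Equiv.swap 0 j) (fun i => q (x i))
    simp [Equiv.arrowCongr, this]

lemma distinctProb_succ {n k : ℕ} (q : Fin n → ℝ) (hq : ∑ i, q i = 1) :
    distinctProb q (k + 1) = ∑ x ∈ injSeq n k, (∏ i, q (x i)) * (1 - ∑ i, q (x i)) := by
  unfold distinctProb
  rw [sum_injSeq_succ]
  refine Finset.sum_congr rfl fun g hg => ?_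
  rw [← sum_avoid (mem_injSeq.1 hg) q hq, Finset.mul_sum]
  refine Finset.sum_congr rfl fun a _ => ?_
  simp [Fin.prod_univ_succ, mul_comm]

lemma distinctProb_step {n k : ℕ} (q : Fin n → ℝ) (h0 : ∀ i, 0 ≤ q i) (hq : ∑ i, q i = 1) :
    n * distinctProb q (k + 1) ≤ (n - k) * distinctProb q k := by
  rcases k with _ | m
  · rw [distinctProb_succ q hq]
    simp [distinctProb]
  set A : ℝ := ∑ g ∈ injSeq n m, (∏ i, q (g i)) * ∑ a ∈ avoid g, q a ^ 2 with hA
  have hA' : ∑ x ∈ injSeq n (m + 1), (∏ i, q (x i)) * q (x 0) = A := by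
    rw [sum_injSeq_succ]
    refine Finset.sum_congr rfl fun g hg => ?_
    rw [Finset.mul_sum]
    refine Finset.sum_congr rfl fun a _ => ?_
    simp [Fin.prod_univ_succ]
    ring
  have e1 : distinctProb q (m + 1 + 1) = distinctProb q (m + 1) - (m + 1) * A := by
    rw [distinctProb_succ q hq]
    simp only [mul_sub, mul_one, Finset.sum_sub_distrib, Finset.mul_sum]
    rw [Finset.sum_comm]
    simp only [sum_symm, hA']
    simp [distinctProb]
  have e2 : distinctProb q (m + 1 + 1) ≤ (n - (m + 1)) * A := by
    rw [distinctProb_succ q hq, sum_injSeq_succ, hA, Finset.mul_sum]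
    refine Finset.sum_le_sum fun g hg => ?_
    have hg' := mem_injSeq.1 hg
    have hs := sum_avoid hg' q hq
    have : ∑ a ∈ avoid g, (∏ i, q ((Fin.cons a g : Fin (m + 1) → Fin n) i)) *
        (1 - ∑ i, q ((Fin.cons a g : Fin (m + 1) → Fin n) i)) =
        (∏ i, q (g i)) * ((∑ a ∈ avoid g, q a) ^ 2 - ∑ a ∈ avoid g, q a ^ 2) := by
      rw [sq (∑ a ∈ avoid g, q a), Finset.sum_mul, ← Finset.sum_sub_distrib, Finset.mul_sum]
      refine Finset.sum_congr rfl fun a _ => ?_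
      rw [hs]
      simp only [Fin.prod_univ_succ, Fin.sum_univ_succ, Fin.cons_zero, Fin.cons_succ]
      ring
    rw [this]
    have hc := sq_sum_le_card_mul_sum_sq (s := avoid g) (f := q)
    rw [card_avoid hg'] at hc
    have hp : 0 ≤ ∏ i, q (g i) := Finset.prod_nonneg fun i _ => h0 _
    calc _ ≤ (∏ i, q (g i)) * ((n - (m + 1)) * ∑ a ∈ avoid g, q a ^ 2) := by
          refine mul_le_mul_of_nonneg_left ?_ hp
          linarith
      _ = _ := by ring
  push_cast
  have hm : (0 : ℝ) ≤ m + 1 := by positivity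
  nlinarith [mul_le_mul_of_nonneg_left e2 hm]

lemma distinctProb_le {n k : ℕ} (hk : k ≤ n) (q : Fin n → ℝ) (h0 : ∀ i, 0 ≤ q i)
    (hq : ∑ i, q i = 1) : n ^ k * distinctProb q k ≤ n.descFactorial k := by
  induction k with
  | zero => simp [distinctProb, injSeq, Function.injective_of_subsingleton]
  | succ k ih =>
    have h1 := ih (by omega)
    have h2 := distinctProb_step (k := k) q h0 hq
    rw [Nat.descFactorial_succ, Nat.cast_mul, Nat.cast_sub (by omega)]
    have h3 : (0 : ℝ) ≤ n - k := by
      have : (k : ℝ) + 1 ≤ n := by exact_mod_cast hk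
      linarith
    calc (n : ℝ) ^ (k + 1) * distinctProb q (k + 1)
        = n ^ k * (n * distinctProb q (k + 1)) := by ring
      _ ≤ n ^ k * ((n - k) * distinctProb q k) := by gcongr
      _ = (n - k) * (n ^ k * distinctProb q k) := by ring
      _ ≤ _ := by gcongr

lemma pi_injSeq_le {n k : ℕ} (hn : 0 < n) (hk : k ≤ n) (Q : ProbabilityMeasure (Fin n)) :
    Measure.pi (fun _ : Fin k => (Q : Measure (Fin n))) (injSeq n k : Set (Fin k → Fin n)) ≤
      ENNReal.ofReal (n.descFactorial k / (n : ℝ) ^ k) := by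
  have h0 : ∀ i, 0 ≤ (Q : Measure (Fin n)).real {i} := fun i => measureReal_nonneg
  have hq : ∑ i, (Q : Measure (Fin n)).real {i} = 1 := by
    rw [sum_measureReal_singleton]
    simp
  have h := distinctProb_le hk _ h0 hq
  rw [← ofReal_measureReal, ← sum_measureReal_singleton]
  refine ENNReal.ofReal_le_ofReal ?_
  rw [le_div_iff₀ (by positivity), mul_comm]
  refine le_trans (le_of_eq ?_) h
  congr 1
  refine Finset.sum_congr rfl fun f _ => ?_
  simp [Measure.real, Measure.pi_singleton, ENNReal.toReal_prod]

lemma draw_real_singleton {n k : ℕ} (x : Fin k → Fin n) :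
    (drawWithoutReplacement n n k id).real {x} =
      if x ∈ injSeq n k then ((n.descFactorial k : ℝ))⁻¹ else 0 := by
  classical
  have h : (drawWithoutReplacement n n k id) {x} =
      ((n.descFactorial k : ℝ≥0∞))⁻¹ * if x ∈ injSeq n k then 1 else 0 := by
    rw [← card_injSeq]
    simp [drawWithoutReplacement, Measure.finsetSum_apply, injSeq, Set.indicator_apply, 
      Finset.sum_ite_eq']
  rw [Measure.real, h]
  split_ifs <;> simp

/-- **Tightness of the finite de Finetti bound** (Song–Attiah–Yu). Let `h(Q_U,n,k;·)` be
the law of sampling `k < n` balls without replacement from an urn of `n` balls of `n`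
different colours. Then, for any mixing probability measure `μ` on `ℳ(S)`, `S = {1,…,n}`,
`D(h(Q_U,n,k;·) ‖ M_{k,μ}) ≥ log (n^k (n−k)!/n!)`, where `M_{k,μ}` is the mixture of
i.i.d. measures `M_{k,μ}(A) = ∫ Q^k(A) dμ(Q)`. -/
theorem deFinetti_relEntropy_converse {n k : ℕ} (hn : 0 < n) (hk : k < n)
    (μ : Measure (ProbabilityMeasure (Fin n))) [IsProbabilityMeasure μ]
    (M : Measure (Fin k → Fin n))
    (hM : ∀ A : Set (Fin k → Fin n), MeasurableSet A →
        M A = ∫⁻ Q : ProbabilityMeasure (Fin n),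
          Measure.pi (fun _ : Fin k => (Q : Measure (Fin n))) A ∂μ) :
    ENNReal.ofReal (Real.log ((n : ℝ) ^ k * (n - k).factorial / n.factorial)) ≤
      klDiv (drawWithoutReplacement n n k id) M := by
  unfold klDiv
  split_ifs with hac
  swap
  · exact le_top
  obtain ⟨hac, hint⟩ := hac
  refine ENNReal.ofReal_le_ofReal ?_
  have hN : (0 : ℝ) < n.descFactorial k := by
    exact_mod_cast Nat.descFactorial_pos.2 hk.le
  have hnk : (0 : ℝ) < (n : ℝ) ^ k := by positivity
  set c : ℝ := (n : ℝ) ^ k / n.descFactorial k with hc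
  have hcpos : 0 < c := by positivity
  have hc' : (n : ℝ) ^ k * (n - k).factorial / n.factorial = c := by
    have := Nat.factorial_mul_descFactorial hk.le
    rw [hc, ← this]
    push_cast
    have : ((n - k).factorial : ℝ) ≠ 0 := by positivity
    field_simp
  rw [hc']
  have hMuniv : IsProbabilityMeasure M := ⟨by rw [hM _ MeasurableSet.univ]; simp⟩
  have hME : M.real (injSeq n k : Set (Fin k → Fin n)) ≤ c⁻¹ := by
    refine ENNReal.toReal_le_of_le_ofReal (by positivity) ?_
    rw [hM _ (Finset.measurableSet _), hc, inv_div]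
    calc _ ≤ ∫⁻ _ : ProbabilityMeasure (Fin n),
          ENNReal.ofReal (n.descFactorial k / (n : ℝ) ^ k) ∂μ :=
          lintegral_mono fun Q => pi_injSeq_le hn hk.le Q
      _ = _ := by simp
  set P := drawWithoutReplacement n n k id with hP
  have hPfin : IsFiniteMeasure P := by
    refine ⟨?_⟩
    rw [hP, drawWithoutReplacement]
    have := card_injSeq n k
    unfold injSeq at this
    have h0 : n.descFactorial k ≠ 0 := by exact_mod_cast hN.ne'
    simp [this, Measure.finsetSum_apply, ENNReal.mul_lt_top_iff, h0]
    exact hk.le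
  have hrn : ∀ x, P.real {x} = (P.rnDeriv M x).toReal * M.real {x} := by
    intro x
    conv_lhs => rw [← Measure.withDensity_rnDeriv_eq P M hac]
    rw [Measure.real, withDensity_apply _ (measurableSet_singleton x), lintegral_singleton,
      ENNReal.toReal_mul, Measure.real]
  rw [integral_fintype hint]
  have hPs : ∀ x, P.real {x} = if x ∈ injSeq n k then ((n.descFactorial k : ℝ))⁻¹ else 0 :=
    draw_real_singleton
  have hsum : ∑ x ∈ injSeq n k, P.real {x} = 1 := by
    rw [Finset.sum_congr rfl (fun x hx => by rw [hPs, if_pos hx])]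
    rw [Finset.sum_const, card_injSeq, nsmul_eq_mul, mul_inv_cancel₀ hN.ne']
  have hred : ∑ x, P.real {x} • llr P M x = ∑ x ∈ injSeq n k, P.real {x} * llr P M x := by
    symm
    refine Finset.sum_subset (Finset.subset_univ _) fun x _ hx => ?_
    rw [hPs, if_neg hx, zero_mul]
  rw [hred]
  have hterm : ∀ x ∈ injSeq n k,
      P.real {x} * (Real.log c + 1) - c * M.real {x} ≤ P.real {x} * llr P M x := by
    intro x hx
    have hpos : 0 < P.real {x} := by rw [hPs, if_pos hx]; positivity
    have hr := hrn x
    set r := (P.rnDeriv M x).toReal with hrdef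
    have hr0 : 0 ≤ r := ENNReal.toReal_nonneg
    have hrpos : 0 < r := by
      rcases hr0.eq_or_lt with h | h
      · rw [← h, zero_mul] at hr
        exact absurd hr hpos.ne'
      · exact h
    have hl := Real.one_sub_inv_le_log_of_pos (div_pos hrpos hcpos)
    rw [Real.log_div hrpos.ne' hcpos.ne', inv_div] at hl
    have hM' : c * M.real {x} = P.real {x} * (c / r) := by
      rw [hr]; field_simp
    have : llr P M x = Real.log r := rfl
    rw [hM', this, ← mul_sub]
    refine mul_le_mul_of_nonneg_left ?_ hpos.le
    linarith
  have hfin := Finset.sum_le_sum hterm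
  rw [Finset.sum_sub_distrib, ← Finset.sum_mul, hsum, ← Finset.mul_sum,
    sum_measureReal_singleton] at hfin
  have : c * M.real (injSeq n k : Set (Fin k → Fin n)) ≤ 1 := by
    calc _ ≤ c * c⁻¹ := by gcongr
      _ = 1 := mul_inv_cancel₀ hcpos.ne'
  linarith
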